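/- Let G be a simple graph on n vertices, let t ≥ 2 be an integer, and let c = (c_i)_{i≥1} be a cost vector of nonnegative reals such that c_{i+1} - c_i ≤ c_t for all i ≥ t. If G' is a spanning subgraph of G, then for every integer b ≥ t + 1, π*_t(G', c) ≤ π*_t(G, c) + 2·c_t·n^t/(b-t)^{t-1} + c_t·C(b,t)·|E(G) \ E(G')|·n^{t-2}, where C(b,t) denotes the binomial coefficient b choose t. -/

import Mathlib

open scoped Classical
open Finset

/-- `K` is a clique of `G`: a nonempty set of pairwise adjacent vertices. -/
def IsCliqueOf {V : Type} [Fintype V] [DecidableEq V] (G : SimpleGraph V) (K : Finset V) : Prop :=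
  K.Nonempty ∧ G.IsClique (K : Set V)

/-- Total `c`-cost of a weighting `f` of the finsets of vertices. -/
noncomputable def cliqueCost {V : Type} [Fintype V] [DecidableEq V]
    (c : ℕ → ℝ) (f : Finset V → ℝ) : ℝ :=
  ∑ K : Finset V, c K.card * f K

/-- `f` is a fractional `t`-clique cover of `G`. -/
def IsFracCover {V : Type} [Fintype V] [DecidableEq V]
    (t : ℕ) (G : SimpleGraph V) (f : Finset V → ℝ) : Prop :=
  (∀ K, 0 ≤ f K) ∧ (∀ K, ¬ IsCliqueOf G K → f K = 0) ∧
  ∀ T : Finset V, T.card = t → G.IsClique (T : Set V) →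
    1 ≤ ∑ K ∈ Finset.univ.filter (fun K => T ⊆ K), f K

/-- `f` is a fractional `t`-clique decomposition of `G`. -/
def IsFracDecomp {V : Type} [Fintype V] [DecidableEq V]
    (t : ℕ) (G : SimpleGraph V) (f : Finset V → ℝ) : Prop :=
  (∀ K, 0 ≤ f K) ∧ (∀ K, ¬ IsCliqueOf G K → f K = 0) ∧
  ∀ T : Finset V, T.card = t → G.IsClique (T : Set V) →
    ∑ K ∈ Finset.univ.filter (fun K => T ⊆ K), f K = 1

/-- `f` is an integer (`{0,1}`-valued) `t`-clique cover of `G`. -/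
def IsIntCover {V : Type} [Fintype V] [DecidableEq V]
    (t : ℕ) (G : SimpleGraph V) (f : Finset V → ℝ) : Prop :=
  IsFracCover t G f ∧ ∀ K, f K = 0 ∨ f K = 1

/-- `f` is an integer (`{0,1}`-valued) `t`-clique decomposition of `G`. -/
def IsIntDecomp {V : Type} [Fintype V] [DecidableEq V]
    (t : ℕ) (G : SimpleGraph V) (f : Finset V → ℝ) : Prop :=
  IsFracDecomp t G f ∧ ∀ K, f K = 0 ∨ f K = 1

/-- θ*_t(G,c): minimum total c-cost of a fractional t-clique cover. -/
noncomputable def thetaFrac {V : Type} [Fintype V] [DecidableEq V]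
    (t : ℕ) (G : SimpleGraph V) (c : ℕ → ℝ) : ℝ :=
  sInf { x | ∃ f, IsFracCover t G f ∧ x = cliqueCost c f }

/-- θ_t(G,c): minimum total c-cost of an integer t-clique cover. -/
noncomputable def thetaInt {V : Type} [Fintype V] [DecidableEq V]
    (t : ℕ) (G : SimpleGraph V) (c : ℕ → ℝ) : ℝ :=
  sInf { x | ∃ f, IsIntCover t G f ∧ x = cliqueCost c f }

/-- π*_t(G,c): minimum total c-cost of a fractional t-clique decomposition. -/
noncomputable def piFrac {V : Type} [Fintype V] [DecidableEq V]
    (t : ℕ) (G : SimpleGraph V) (c : ℕ → ℝ) : ℝ :=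
  sInf { x | ∃ f, IsFracDecomp t G f ∧ x = cliqueCost c f }

/-- π_t(G,c): minimum total c-cost of an integer t-clique decomposition. -/
noncomputable def piInt {V : Type} [Fintype V] [DecidableEq V]
    (t : ℕ) (G : SimpleGraph V) (c : ℕ → ℝ) : ℝ :=
  sInf { x | ∃ f, IsIntDecomp t G f ∧ x = cliqueCost c f }

/-- `G` is complete multipartite: vertices can be assigned to parts so that
adjacency holds exactly between distinct parts. -/
def IsCompleteMultipartite {V : Type} [Fintype V] [DecidableEq V]
    (G : SimpleGraph V) : Prop :=
  ∃ p : V → ℕ, ∀ u v, G.Adj u v ↔ p u ≠ p v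

/-!
Start from a fractional `t`-clique decomposition of `G`. Spreading each clique with more than `b`
vertices uniformly over its `b`-subsets costs `c_b / C(b,t)` for each of its `t`-subsets; as every
`t`-clique is covered exactly once, this adds at most `C(n,t) * c_b / C(b,t)` in total, and
`c_b ≤ (b - t + 1) * c_t`. All cliques now have at most `b` vertices. Those which are not cliques of
`G'` are replaced by the `t`-cliques of `G'` inside them, at cost at most `c_t * C(b,t)` each. Each
of them with at least `t` vertices contains a `t`-clique of `G` destroyed in `G'`, so the total
weight of these is at most the number of destroyed `t`-cliques, which is at most
`|E(G) \ E(G')| * n ^ (t - 2)`.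
-/

section Graph

variable {V : Type*} {t b : ℕ} {G H : SimpleGraph V} {L : Finset V}

lemma exists_ne_not_adj_of_not_isClique {s : Set V} (hs : ¬ G.IsClique s) :
    ∃ u ∈ s, ∃ v ∈ s, u ≠ v ∧ ¬ G.Adj u v := by
  simpa [SimpleGraph.isClique_iff, Set.Pairwise] using hs

variable [Fintype V] [DecidableEq V]

lemma filter_cliqueFinset_subset_eq_powersetCard (hL : G.IsClique L) :
    {T ∈ G.cliqueFinset t | T ⊆ L} = L.powersetCard t := by
  ext T
  simp only [mem_filter, SimpleGraph.mem_cliqueFinset_iff, SimpleGraph.isNClique_iff,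
    mem_powersetCard]
  exact ⟨fun h => ⟨h.2, h.1.2⟩, fun h => ⟨⟨hL.subset (coe_subset.2 h.1), h.2⟩, h.1⟩⟩

lemma exists_mem_cliqueFinset_sdiff_subset (ht : 2 ≤ t) (htL : t ≤ #L) (hLG : G.IsClique L)
    (hLH : ¬ H.IsClique L) : ∃ T ∈ G.cliqueFinset t \ H.cliqueFinset t, T ⊆ L := by
  obtain ⟨u, hu, v, hv, huv, hadj⟩ := exists_ne_not_adj_of_not_isClique hLH
  obtain ⟨T, huvT, hTL, hT⟩ := exists_subsuperset_card_eq
    (show {u, v} ⊆ L from insert_subset hu (singleton_subset_iff.2 hv)) (by rwa [card_pair huv]) htL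
  refine ⟨T, mem_sdiff.2 ⟨?_, fun hTH => hadj ?_⟩, hTL⟩
  · exact SimpleGraph.mem_cliqueFinset_iff.2 ⟨hLG.subset (coe_subset.2 hTL), hT⟩
  · exact (SimpleGraph.mem_cliqueFinset_iff.1 hTH).isClique (huvT (by simp)) (huvT (by simp)) huv

lemma choose_card_le_mul_card_filter_sdiff (ht : 2 ≤ t) (hLb : #L ≤ b) (hLG : G.IsClique L)
    (hLH : ¬ H.IsClique L) :
    (#L).choose t ≤ b.choose t * #{T ∈ G.cliqueFinset t \ H.cliqueFinset t | T ⊆ L} := by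
  obtain hLt | htL := lt_or_ge #L t
  · rw [Nat.choose_eq_zero_of_lt hLt]
    exact Nat.zero_le _
  · obtain ⟨T, hT, hTL⟩ := exists_mem_cliqueFinset_sdiff_subset ht htL hLG hLH
    exact (Nat.choose_le_choose t hLb).trans
      (Nat.le_mul_of_pos_right _ (card_pos.2 ⟨T, mem_filter.2 ⟨hT, hTL⟩⟩))

lemma card_filter_cliqueFinset_subset_le (G : SimpleGraph V) (L : Finset V) (t : ℕ) :
    #{T ∈ G.cliqueFinset t | T ⊆ L} ≤ (#L).choose t := by
  rw [← card_powersetCard]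
  refine card_le_card fun T hT => ?_
  obtain ⟨hTG, hTL⟩ := mem_filter.1 hT
  exact mem_powersetCard.2 ⟨hTL, (SimpleGraph.mem_cliqueFinset_iff.1 hTG).card_eq⟩

lemma card_cliqueFinset_sdiff_le (ht : 2 ≤ t) (G H : SimpleGraph V) :
    #(G.cliqueFinset t \ H.cliqueFinset t) ≤
      (G.edgeSet \ H.edgeSet).ncard * (Fintype.card V - 2).choose (t - 2) := by
  have hcover : G.cliqueFinset t \ H.cliqueFinset t ⊆ (G.edgeSet \ H.edgeSet).toFinset.biUnion
      fun e => {T ∈ univ.powersetCard t | e.toFinset ⊆ T} := by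
    intro T hT
    obtain ⟨hTG, hTH⟩ := mem_sdiff.1 hT
    rw [SimpleGraph.mem_cliqueFinset_iff] at hTG hTH
    obtain ⟨u, hu, v, hv, huv, hadj⟩ :=
      exists_ne_not_adj_of_not_isClique fun h => hTH ⟨h, hTG.card_eq⟩
    refine mem_biUnion.2 ⟨s(u, v), Set.mem_toFinset.2 ⟨hTG.isClique hu hv huv, hadj⟩, ?_⟩
    refine mem_filter.2 ⟨mem_powersetCard.2 ⟨subset_univ T, hTG.card_eq⟩, fun x hx => ?_⟩
    obtain rfl | rfl := Sym2.mem_iff.1 (Sym2.mem_toFinset.1 hx)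
    exacts [hu, hv]
  rw [Set.ncard_eq_toFinset_card']
  refine (card_le_card hcover).trans (card_biUnion_le_card_mul _ _ _ fun e he => ?_)
  have he2 : #e.toFinset = 2 :=
    Sym2.card_toFinset_of_not_isDiag e (G.not_isDiag_of_mem_edgeSet (Set.mem_toFinset.1 he).1)
  rw [card_filter_powersetCard_subset _ _ _ (subset_univ _) (by omega), he2, card_univ]

end Graph

section Weighting

variable {V : Type} [DecidableEq V]

/-- The weighting with constant value `a` on the family `S` and `0` elsewhere. All splittings of a
single clique are of this form. -/
noncomputable def uniformWeighting (S : Finset (Finset V)) (a : ℝ) (K : Finset V) : ℝ :=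
  if K ∈ S then a else 0

lemma mem_of_uniformWeighting_ne_zero {S : Finset (Finset V)} {a : ℝ} {K : Finset V}
    (hK : uniformWeighting S a K ≠ 0) : K ∈ S :=
  by_contra fun h => hK (if_neg h)

variable [Fintype V] {t b : ℕ} {c : ℕ → ℝ} {G H : SimpleGraph V}
  {L : Finset V} {f : Finset V → ℝ} {w : Finset V → Finset V → ℝ}

/-- `f` is a fractional `t`-clique decomposition of the subgraph of `G` induced on `L`. It is
encoded as a weighting of all vertex sets, supported on the cliques of `G` contained in `L`, so that
decompositions on different sets `L` can be superposed. -/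
structure IsFracDecompOn (t : ℕ) (G : SimpleGraph V) (L : Finset V) (f : Finset V → ℝ) : Prop where
  nonneg : ∀ K, 0 ≤ f K
  isCliqueOf_and_subset : ∀ K, f K ≠ 0 → IsCliqueOf G K ∧ K ⊆ L
  sum_eq_one : ∀ T : Finset V, #T = t → G.IsClique T → T ⊆ L → ∑ K with T ⊆ K, f K = 1

lemma IsFracDecompOn.sum_eq_ite (hf : IsFracDecompOn t G L f) {T : Finset V} (hT : #T = t)
    (hTG : G.IsClique T) : ∑ K with T ⊆ K, f K = if T ⊆ L then 1 else 0 := by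
  split_ifs with hTL
  · exact hf.sum_eq_one T hT hTG hTL
  · refine sum_eq_zero fun K hK => by_contra fun hfK => hTL ?_
    exact (mem_filter.1 hK).2.trans (hf.isCliqueOf_and_subset K hfK).2

lemma IsFracDecompOn.isFracDecomp (hf : IsFracDecompOn t G univ f) : IsFracDecomp t G f :=
  ⟨hf.nonneg, fun K hK => by_contra fun h => hK (hf.isCliqueOf_and_subset K h).1,
    fun T hT hTG => hf.sum_eq_one T hT hTG (subset_univ T)⟩

lemma isFracDecompOn_uniformWeighting {S : Finset (Finset V)} {a : ℝ} (ha : 0 ≤ a)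
    (hS : ∀ K ∈ S, IsCliqueOf G K ∧ K ⊆ L)
    (hT : ∀ T : Finset V, #T = t → G.IsClique T → T ⊆ L → (#{K ∈ S | T ⊆ K} : ℝ) * a = 1) :
    IsFracDecompOn t G L (uniformWeighting S a) where
  nonneg K := by unfold uniformWeighting; positivity
  isCliqueOf_and_subset K hK := hS K (mem_of_uniformWeighting_ne_zero hK)
  sum_eq_one T hTt hTG hTL := by
    simp only [uniformWeighting]
    rw [← sum_filter, sum_const, nsmul_eq_mul, filter_filter, ← hT T hTt hTG hTL]
    congr 3
    ext K
    simp only [mem_filter, mem_univ, true_and, and_comm]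

lemma cliqueCost_uniformWeighting {S : Finset (Finset V)} {s : ℕ} (hS : ∀ K ∈ S, #K = s)
    (c : ℕ → ℝ) (a : ℝ) : cliqueCost c (uniformWeighting S a) = #S * (c s * a) := by
  simp only [cliqueCost, uniformWeighting, mul_ite, mul_zero]
  rw [← sum_filter, filter_mem_eq_inter, univ_inter, sum_congr rfl fun K hK => by rw [hS K hK],
    sum_const, nsmul_eq_mul]

lemma cliqueCost_uniformWeighting_singleton (c : ℕ → ℝ) (L : Finset V) :
    cliqueCost c (uniformWeighting {L} 1) = c #L := by
  rw [cliqueCost_uniformWeighting (s := #L) (by simp), card_singleton, Nat.cast_one, one_mul,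
    mul_one]

lemma isFracDecompOn_uniformWeighting_singleton (hL : IsCliqueOf G L) :
    IsFracDecompOn t G L (uniformWeighting {L} 1) := by
  refine isFracDecompOn_uniformWeighting zero_le_one ?_ fun T _ _ hTL => ?_
  · simpa using hL
  · simp [filter_singleton, hTL]

lemma isFracDecompOn_uniformWeighting_powersetCard (hL : G.IsClique L) (hb : 1 ≤ b) (htb : t ≤ b)
    (hbL : b ≤ #L) : IsFracDecompOn t G L
      (uniformWeighting (L.powersetCard b) ((#L - t).choose (b - t) : ℝ)⁻¹) := by
  refine isFracDecompOn_uniformWeighting (by positivity) (fun K hK => ?_) fun T hT _ hTL => ?_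
  · obtain ⟨hKL, hKb⟩ := mem_powersetCard.1 hK
    exact ⟨⟨card_pos.1 (by omega), hL.subset (coe_subset.2 hKL)⟩, hKL⟩
  · rw [card_filter_powersetCard_subset T L b hTL (by omega), hT]
    exact mul_inv_cancel₀ (by exact_mod_cast (Nat.choose_pos (by omega)).ne')

lemma isFracDecompOn_uniformWeighting_cliqueFinset (ht : 1 ≤ t) (G : SimpleGraph V)
    (L : Finset V) :
    IsFracDecompOn t G L (uniformWeighting {T ∈ G.cliqueFinset t | T ⊆ L} 1) := by
  refine isFracDecompOn_uniformWeighting zero_le_one (fun K hK => ?_) fun T hT hTG hTL => ?_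
  · obtain ⟨hKG, hKL⟩ := mem_filter.1 hK
    rw [SimpleGraph.mem_cliqueFinset_iff] at hKG
    exact ⟨⟨card_pos.1 (by rw [hKG.card_eq]; omega), hKG.isClique⟩, hKL⟩
  · have hsingle : {K ∈ {T ∈ G.cliqueFinset t | T ⊆ L} | T ⊆ K} = {T} := by
      ext K
      simp only [mem_filter, SimpleGraph.mem_cliqueFinset_iff, mem_singleton]
      constructor
      · rintro ⟨⟨hK, -⟩, hTK⟩
        exact (eq_of_subset_of_card_le hTK (by rw [hK.card_eq, hT])).symm
      · rintro rfl
        exact ⟨⟨⟨hTG, hT⟩, hTL⟩, Subset.rfl⟩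
    rw [hsingle, card_singleton, Nat.cast_one, mul_one]

lemma exists_isFracDecompOn_card_le (hL : IsCliqueOf G L) (hb : 1 ≤ b) (htb : t ≤ b)
    (hcL : 0 ≤ c #L) (hcb : 0 ≤ c b) :
    ∃ w, IsFracDecompOn t G L w ∧ (∀ K, w K ≠ 0 → #K ≤ b) ∧
      cliqueCost c w ≤ c #L + c b / b.choose t * (#L).choose t := by
  obtain hLb | hbL := le_or_gt #L b
  · refine ⟨_, isFracDecompOn_uniformWeighting_singleton hL, fun K hK => ?_, ?_⟩
    · obtain rfl : K = L := mem_singleton.1 (mem_of_uniformWeighting_ne_zero hK)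
      exact hLb
    · rw [cliqueCost_uniformWeighting_singleton]
      exact le_add_of_nonneg_right (by positivity)
  · refine ⟨_, isFracDecompOn_uniformWeighting_powersetCard hL.2 hb htb hbL.le, fun K hK => ?_, ?_⟩
    · exact (mem_powersetCard.1 (mem_of_uniformWeighting_ne_zero hK)).2.le
    · have hbt : (b.choose t : ℝ) ≠ 0 := by exact_mod_cast (Nat.choose_pos htb).ne'
      have hLbt : ((#L - t).choose (b - t) : ℝ) ≠ 0 := by
        exact_mod_cast (Nat.choose_pos (by omega)).ne'
      have hmul : ((#L).choose b : ℝ) * b.choose t =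
          (#L).choose t * (#L - t).choose (b - t) := by exact_mod_cast Nat.choose_mul htb
      rw [cliqueCost_uniformWeighting fun K hK => (mem_powersetCard.1 hK).2, card_powersetCard]
      calc ((#L).choose b : ℝ) * (c b * ((#L - t).choose (b - t) : ℝ)⁻¹)
          = c b / b.choose t * (#L).choose t := by
            field_simp
            linear_combination c b * hmul
        _ ≤ _ := le_add_of_nonneg_left hcL

lemma exists_isFracDecompOn_of_card_le (ht : 2 ≤ t) (hL : IsCliqueOf G L) (hLb : #L ≤ b)
    (H : SimpleGraph V) (hcL : 0 ≤ c #L) (hct : 0 ≤ c t) :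
    ∃ w, IsFracDecompOn t H L w ∧ cliqueCost c w ≤ c #L +
      c t * b.choose t * #{T ∈ G.cliqueFinset t \ H.cliqueFinset t | T ⊆ L} := by
  by_cases hLH : H.IsClique L
  · refine ⟨_, isFracDecompOn_uniformWeighting_singleton ⟨hL.1, hLH⟩, ?_⟩
    rw [cliqueCost_uniformWeighting_singleton]
    exact le_add_of_nonneg_right (by positivity)
  · refine ⟨_, isFracDecompOn_uniformWeighting_cliqueFinset (by omega) H L, ?_⟩
    have hsize : ∀ T ∈ {T ∈ H.cliqueFinset t | T ⊆ L}, #T = t := fun T hT =>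
      (SimpleGraph.mem_cliqueFinset_iff.1 (mem_filter.1 hT).1).card_eq
    have hcard : #{T ∈ H.cliqueFinset t | T ⊆ L} ≤
        b.choose t * #{T ∈ G.cliqueFinset t \ H.cliqueFinset t | T ⊆ L} :=
      (card_filter_cliqueFinset_subset_le H L t).trans
        (choose_card_le_mul_card_filter_sdiff ht hLb hL.2 hLH)
    rw [cliqueCost_uniformWeighting hsize, mul_one, mul_comm, mul_assoc]
    refine (mul_le_mul_of_nonneg_left ?_ hct).trans (le_add_of_nonneg_left hcL)
    exact_mod_cast hcard

/-- The weighting obtained from `f` by redistributing the weight of each vertex set `L` according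
to `w L`; it serves to refine the decomposition `f` by decompositions `w L` on the sets `L`. -/
def redistribute (f : Finset V → ℝ) (w : Finset V → Finset V → ℝ) (K : Finset V) : ℝ :=
  ∑ L, f L * w L K

lemma cliqueCost_redistribute (c : ℕ → ℝ) (f : Finset V → ℝ) (w : Finset V → Finset V → ℝ) :
    cliqueCost c (redistribute f w) = ∑ L, f L * cliqueCost c (w L) := by
  simp only [cliqueCost, redistribute, mul_sum]
  rw [sum_comm]
  exact sum_congr rfl fun L _ => sum_congr rfl fun K _ => mul_left_comm _ _ _

namespace IsFracDecomp

lemma isCliqueOf_of_ne_zero (hf : IsFracDecomp t G f) (hL : f L ≠ 0) : IsCliqueOf G L :=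
  by_contra fun h => hL (hf.2.1 L h)

lemma isFracDecomp_redistribute (hf : IsFracDecomp t G f) (hHG : H ≤ G)
    (hw : ∀ L, f L ≠ 0 → IsFracDecompOn t H L (w L)) : IsFracDecomp t H (redistribute f w) := by
  refine ⟨fun K => sum_nonneg fun L _ => ?_, fun K hK => sum_eq_zero fun L _ => ?_,
    fun T hT hTH => ?_⟩
  · obtain hL | hL := eq_or_ne (f L) 0
    · rw [hL, zero_mul]
    · exact mul_nonneg (hf.1 L) ((hw L hL).nonneg K)
  · refine mul_eq_zero.2 (or_iff_not_imp_left.2 fun hL => by_contra fun h => hK ?_)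
    exact ((hw L hL).isCliqueOf_and_subset K h).1
  · have hfT : ∀ L, f L * ∑ K with T ⊆ K, w L K = if T ⊆ L then f L else 0 := fun L => by
      obtain hL | hL := eq_or_ne (f L) 0
      · rw [hL, zero_mul, ite_self]
      · rw [(hw L hL).sum_eq_ite hT hTH, mul_ite, mul_one, mul_zero]
    simp only [redistribute]
    rw [sum_comm]
    simp only [← mul_sum, hfT, ← sum_filter]
    exact hf.2.2 T hT (hTH.mono hHG)

lemma sum_mul_card_filter_subset (hf : IsFracDecomp t G f) {S : Finset (Finset V)}
    (hS : S ⊆ G.cliqueFinset t) : ∑ L, f L * #{T ∈ S | T ⊆ L} = #S := by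
  have hL : ∀ L, f L * (#{T ∈ S | T ⊆ L} : ℝ) = ∑ T ∈ S, if T ⊆ L then f L else 0 := fun L => by
    rw [← sum_filter, sum_const, nsmul_eq_mul, mul_comm]
  have hT : ∀ T ∈ S, (∑ L, if T ⊆ L then f L else 0) = 1 := fun T hT => by
    have hTG := SimpleGraph.mem_cliqueFinset_iff.1 (hS hT)
    rw [← sum_filter, hf.2.2 T hTG.card_eq hTG.isClique]
  simp only [hL]
  rw [sum_comm, sum_congr rfl hT, sum_const, nsmul_eq_mul, mul_one]

lemma cliqueCost_redistribute_le (hf : IsFracDecomp t G f) {S : Finset (Finset V)}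
    (hS : S ⊆ G.cliqueFinset t) {a : ℝ}
    (hw : ∀ L, f L ≠ 0 → cliqueCost c (w L) ≤ c #L + a * #{T ∈ S | T ⊆ L}) :
    cliqueCost c (redistribute f w) ≤ cliqueCost c f + a * #S := by
  calc cliqueCost c (redistribute f w)
      = ∑ L, f L * cliqueCost c (w L) := cliqueCost_redistribute c f w
    _ ≤ ∑ L, f L * (c #L + a * #{T ∈ S | T ⊆ L}) := sum_le_sum fun L _ => by
        obtain hL | hL := eq_or_ne (f L) 0
        · rw [hL, zero_mul, zero_mul]
        · exact mul_le_mul_of_nonneg_left (hw L hL) (hf.1 L)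
    _ = cliqueCost c f + a * ∑ L, f L * #{T ∈ S | T ⊆ L} := by
        rw [cliqueCost, mul_sum, ← sum_add_distrib]
        exact sum_congr rfl fun L _ => by ring
    _ = cliqueCost c f + a * #S := by rw [hf.sum_mul_card_filter_subset hS]

lemma exists_card_le (hf : IsFracDecomp t G f) (hb : 1 ≤ b) (htb : t ≤ b)
    (hc : ∀ i, 1 ≤ i → 0 ≤ c i) :
    ∃ g, IsFracDecomp t G g ∧ (∀ K, g K ≠ 0 → #K ≤ b) ∧
      cliqueCost c g ≤ cliqueCost c f + c b / b.choose t * #(G.cliqueFinset t) := by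
  choose! w hw hwb hwc using fun L (hL : f L ≠ 0) =>
    have hLG := hf.isCliqueOf_of_ne_zero hL
    exists_isFracDecompOn_card_le (t := t) hLG hb htb (hc #L hLG.1.card_pos) (hc b hb)
  refine ⟨_, hf.isFracDecomp_redistribute le_rfl hw, fun K hK => ?_,
    hf.cliqueCost_redistribute_le Subset.rfl fun L hL => ?_⟩
  · obtain ⟨L, -, hLK⟩ := exists_ne_zero_of_sum_ne_zero hK
    exact hwb L (left_ne_zero_of_mul hLK) K (right_ne_zero_of_mul hLK)
  · rw [filter_cliqueFinset_subset_eq_powersetCard (hf.isCliqueOf_of_ne_zero hL).2,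
      card_powersetCard]
    exact hwc L hL

lemma exists_of_card_le (hf : IsFracDecomp t G f) (ht : 2 ≤ t) (hHG : H ≤ G)
    (hfb : ∀ K, f K ≠ 0 → #K ≤ b) (hc : ∀ i, 1 ≤ i → 0 ≤ c i) :
    ∃ g, IsFracDecomp t H g ∧ cliqueCost c g ≤ cliqueCost c f +
      c t * b.choose t * #(G.cliqueFinset t \ H.cliqueFinset t) := by
  choose! w hw hwc using fun L (hL : f L ≠ 0) =>
    have hLG := hf.isCliqueOf_of_ne_zero hL
    exists_isFracDecompOn_of_card_le ht hLG (hfb L hL) H (hc #L hLG.1.card_pos)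
      (hc t (by omega))
  exact ⟨_, hf.isFracDecomp_redistribute hHG hw, hf.cliqueCost_redistribute_le sdiff_subset hwc⟩

lemma cliqueCost_nonneg (hf : IsFracDecomp t G f) (hc : ∀ i, 1 ≤ i → 0 ≤ c i) :
    0 ≤ cliqueCost c f := by
  refine sum_nonneg fun K _ => ?_
  obtain hK | hK := eq_or_ne (f K) 0
  · rw [hK, mul_zero]
  · exact mul_nonneg (hc #K (hf.isCliqueOf_of_ne_zero hK).1.card_pos) (hf.1 K)

lemma piFrac_le (hf : IsFracDecomp t G f) (hc : ∀ i, 1 ≤ i → 0 ≤ c i) :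
    piFrac t G c ≤ cliqueCost c f :=
  csInf_le ⟨0, by rintro _ ⟨g, hg, rfl⟩; exact hg.cliqueCost_nonneg hc⟩ ⟨f, hf, rfl⟩

end IsFracDecomp

lemma le_piFrac (ht : 1 ≤ t) {x : ℝ} (h : ∀ f, IsFracDecomp t G f → x ≤ cliqueCost c f) :
    x ≤ piFrac t G c := by
  have hG := (isFracDecompOn_uniformWeighting_cliqueFinset ht G univ).isFracDecomp
  refine le_csInf ⟨_, _, hG, rfl⟩ ?_
  rintro _ ⟨f, hf, rfl⟩
  exact h f hf

lemma piFrac_le_add_card_cliqueFinset (ht : 2 ≤ t) (hc : ∀ i, 1 ≤ i → 0 ≤ c i) (hHG : H ≤ G)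
    (htb : t ≤ b) :
    piFrac t H c ≤ piFrac t G c + c b / b.choose t * #(G.cliqueFinset t) +
      c t * b.choose t * #(G.cliqueFinset t \ H.cliqueFinset t) := by
  rw [add_assoc, ← sub_le_iff_le_add]
  refine le_piFrac (by omega) fun f hf => ?_
  obtain ⟨g, hg, hgb, hgf⟩ := hf.exists_card_le (by omega) htb hc
  obtain ⟨h, hh, hhg⟩ := hg.exists_of_card_le ht hHG hgb hc
  linarith [hh.piFrac_le hc]

theorem stmt16_general (ht : 2 ≤ t) (hc : ∀ i, 1 ≤ i → 0 ≤ c i) (hHG : H ≤ G) (htb : t ≤ b) :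
    piFrac t H c ≤ piFrac t G c + c b / b.choose t * (Fintype.card V).choose t +
      c t * b.choose t * (G.edgeSet \ H.edgeSet).ncard * Fintype.card V ^ (t - 2) := by
  have hct := hc t (by omega)
  have hcb := hc b (by omega)
  have hchoose : (Fintype.card V - 2).choose (t - 2) ≤ Fintype.card V ^ (t - 2) :=
    (Nat.choose_le_choose _ (Nat.sub_le _ 2)).trans (Nat.choose_le_pow _ _)
  have hdiff : (#(G.cliqueFinset t \ H.cliqueFinset t) : ℝ) ≤
      (G.edgeSet \ H.edgeSet).ncard * Fintype.card V ^ (t - 2) := by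
    exact_mod_cast (card_cliqueFinset_sdiff_le ht G H).trans (Nat.mul_le_mul_left _ hchoose)
  refine (piFrac_le_add_card_cliqueFinset ht hc hHG htb).trans ?_
  rw [mul_assoc (c t * _)]
  gcongr
  exact G.card_cliqueFinset_le

end Weighting

section Cost

variable {t b : ℕ} {c : ℕ → ℝ}

lemma apply_add_le_of_forall_sub_le (hstep : ∀ i, t ≤ i → c (i + 1) - c i ≤ c t) (k : ℕ) :
    c (t + k) ≤ (k + 1) * c t := by
  induction k with
  | zero => simp
  | succ k ih =>
    have h := hstep (t + k) (by omega)
    rw [← add_assoc]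
    push_cast
    linarith

lemma choose_div_choose_le_div_pow (htb : t ≤ b) (n : ℕ) :
    (n.choose t : ℝ) / b.choose t ≤ (n / (b - t + 1)) ^ t := by
  have hsub : ((b + 1 - t : ℕ) : ℝ) = b - t + 1 := by
    rw [Nat.cast_sub (by omega)]
    push_cast
    ring
  have hpos : (0 : ℝ) < b - t + 1 := by
    rw [← hsub]
    exact_mod_cast (by omega : 0 < b + 1 - t)
  have hlower : ((b : ℝ) - t + 1) ^ t / t.factorial ≤ b.choose t :=
    hsub ▸ Nat.pow_le_choose t b
  calc (n.choose t : ℝ) / b.choose t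
      ≤ (n ^ t / t.factorial) / (((b : ℝ) - t + 1) ^ t / t.factorial) := by
        gcongr
        exact Nat.choose_le_pow_div t n
    _ = (n / (b - t + 1)) ^ t := by rw [div_div_div_cancel_right₀ (by positivity), div_pow]

lemma div_choose_mul_choose_le (ht : 1 ≤ t) (htb : t < b) (hct : 0 ≤ c t)
    (hstep : ∀ i, t ≤ i → c (i + 1) - c i ≤ c t) (n : ℕ) :
    c b / b.choose t * n.choose t ≤ c t * n ^ t / ((b : ℝ) - t) ^ (t - 1) := by
  have hpos : (0 : ℝ) < b - t := sub_pos.2 (by exact_mod_cast htb)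
  have hcb : c b ≤ (b - t + 1) * c t := by
    simpa [Nat.add_sub_cancel' htb.le, Nat.cast_sub htb.le] using
      apply_add_le_of_forall_sub_le hstep (b - t)
  calc c b / b.choose t * n.choose t
      = c b * (n.choose t / b.choose t) := by ring
    _ ≤ (b - t + 1) * c t * (n / (b - t + 1)) ^ t := by
        gcongr
        exact choose_div_choose_le_div_pow htb.le n
    _ = c t * n ^ t / ((b : ℝ) - t + 1) ^ (t - 1) := by
        obtain ⟨s, rfl⟩ := Nat.exists_eq_add_of_le' ht
        rw [Nat.add_sub_cancel, div_pow, pow_succ ((b : ℝ) - _ + 1)]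
        field_simp
    _ ≤ c t * n ^ t / ((b : ℝ) - t) ^ (t - 1) := by
        gcongr
        linarith

end Cost

/-- Lemma 5.1: deleting edges does not increase the fractional `t`-clique
decomposition number by much: for every `b ≥ t + 1`,
`π*_t(G',c) ≤ π*_t(G,c) + 2 c_t nᵗ/(b-t)^{t-1} + c_t (b choose t) |E(G)\E(G')| n^{t-2}`. -/
theorem stmt16 (n t : ℕ) (ht : 2 ≤ t) (c : ℕ → ℝ) (hc : ∀ i, 1 ≤ i → 0 ≤ c i)
    (hstep : ∀ i, t ≤ i → c (i + 1) - c i ≤ c t)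
    (G G' : SimpleGraph (Fin n)) (hsub : G' ≤ G) (b : ℕ) (hb : t + 1 ≤ b) :
    piFrac t G' c ≤ piFrac t G c +
      2 * c t * (n : ℝ) ^ t / ((b : ℝ) - (t : ℝ)) ^ (t - 1) +
      c t * (b.choose t : ℝ) * ((G.edgeSet \ G'.edgeSet).ncard : ℝ) * (n : ℝ) ^ (t - 2) := by
  have hct : 0 ≤ c t := hc t (by omega)
  have hbt : (0 : ℝ) ≤ b - t := sub_nonneg.2 (by exact_mod_cast (Nat.le_of_succ_le hb))
  refine (stmt16_general ht hc hsub (Nat.le_of_succ_le hb)).trans ?_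
  rw [Fintype.card_fin]
  gcongr
  exact (div_choose_mul_choose_le (by omega) hb hct hstep n).trans (by gcongr; linarith)
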